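/- For every K = |𝒳| ≥ 2 and every positive integer M such that M^{1/(K-1)} ≥ 4 is an integer, the degrading cost satisfies DC(K, M) ≤ 1268 · (K-1) · M^{-2/(K-1)}. -/

import Mathlib

open scoped BigOperators

/-- Mutual information (in bits) of a joint probability mass function `p` on `𝒳 × 𝒴`,
with the convention `0 · log 0 = 0`. -/
noncomputable def miBits {𝒳 𝒴 : Type*} (p : 𝒳 → 𝒴 → ℝ) : ℝ :=
  ∑' x, ∑' y, p x y * Real.logb 2 (p x y / ((∑' y', p x y') * (∑' x', p x' y)))

/-- `p` is a joint probability mass function. -/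
def IsJointPMF {𝒳 𝒴 : Type*} (p : 𝒳 → 𝒴 → ℝ) : Prop :=
  (∀ x y, 0 ≤ p x y) ∧ Summable (fun xy : 𝒳 × 𝒴 => p xy.1 xy.2) ∧ (∑' x, ∑' y, p x y) = 1

/-- Joint pmf of `(X, f(Y))` when `(X,Y) ~ p` and `f` is a deterministic `M`-level quantizer. -/
noncomputable def quantJoint {𝒳 𝒴 : Type*} (p : 𝒳 → 𝒴 → ℝ) {M : ℕ} (f : 𝒴 → Fin M) :
    𝒳 → Fin M → ℝ :=
  fun x m => ∑' y, if f y = m then p x y else 0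

/-- `I(X;[Y]_M)`: the best mutual information achievable by a deterministic `M`-level
quantizer of `Y`. -/
noncomputable def quantMI {𝒳 𝒴 : Type*} (p : 𝒳 → 𝒴 → ℝ) (M : ℕ) : ℝ :=
  ⨆ f : 𝒴 → Fin M, miBits (quantJoint p f)

/-- The information distillation function `ID_M(K, β)`. -/
noncomputable def ID (M K : ℕ) (β : ℝ) : ℝ :=
  sInf {v | ∃ p : Fin K → ℕ → ℝ, IsJointPMF p ∧ β ≤ miBits p ∧ v = quantMI p M}

/-- Binary entropy function (bits). -/
noncomputable def hBin (t : ℝ) : ℝ :=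
  -(t * Real.logb 2 t) - (1 - t) * Real.logb 2 (1 - t)

/-- The degrading cost `DC(K, M)`. -/
noncomputable def DC (K M : ℕ) : ℝ :=
  sSup {v | ∃ β : ℝ, 0 < β ∧ β ≤ Real.logb 2 K ∧ v = β - ID M K β}

/-!
By Gibbs' inequality, quantizing `y` to the index `f y` of a law `Q (f y)` loses at most the
average of `D(P_{X|Y=y} ‖ Q (f y))`, so it suffices to cover the simplex on `k + 1 = K` letters
by `M` laws in relative entropy.

For two letters write a law as `(sin² θ, cos² θ)`. Relative entropy is at most the
`χ²`-divergence, and `χ²` between the parameters `θ` and `φ` is at most `16 (θ - φ)²` when `φ` is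
farther from both ends of `[0, π / 2]` than from `θ`; hence the `m` midpoints, which are within
`π / (4 m)` of every `θ`, cover up to `π² / m²`. By the chain rule, revealing a letter among
`k + 1` through `k` binary questions turns this into `m ^ k` laws covering up to `k π² / m²`. The
choice `m = ⌊M ^ (1 / k)⌋` gives the rate `M ^ (-2 / k)`.
-/

/-! ### Relative entropy -/

section RelEntropy

variable {𝒳 : Type*} [Fintype 𝒳] {p q r : 𝒳 → ℝ}

/-- The relative entropy `D(p ‖ q)` in nats of two mass functions, which need not be normalized.
A letter with `q x = 0 < p x` contributes `0` instead of `∞`, so the lemmas below assume that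
`p` vanishes where `q` does. -/
noncomputable def relEntropy (p q : 𝒳 → ℝ) : ℝ :=
  ∑ x, p x * Real.log (p x / q x)

lemma sub_le_mul_log_div {a b : ℝ} (ha : 0 ≤ a) (hb : 0 ≤ b) (hab : b = 0 → a = 0) :
    a - b ≤ a * Real.log (a / b) := by
  rcases ha.eq_or_lt with rfl | ha'
  · simpa using hb
  have hb' : 0 < b := hb.lt_of_ne' fun h => ha'.ne' (hab h)
  calc a - b = a * (1 - (a / b)⁻¹) := by field_simp
    _ ≤ a * Real.log (a / b) :=
      mul_le_mul_of_nonneg_left (Real.one_sub_inv_le_log_of_pos (by positivity)) ha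

lemma relEntropy_nonneg (hp : 0 ≤ p) (hq : 0 ≤ q) (hpq : ∀ x, q x = 0 → p x = 0)
    (hsum : ∑ x, q x ≤ ∑ x, p x) : 0 ≤ relEntropy p q :=
  calc 0 ≤ ∑ x, (p x - q x) := by rw [Finset.sum_sub_distrib]; exact sub_nonneg.2 hsum
    _ ≤ relEntropy p q :=
      Finset.sum_le_sum fun x _ => sub_le_mul_log_div (hp x) (hq x) (hpq x)

lemma mul_log_div_le {a b : ℝ} (ha : 0 ≤ a) (hb : 0 < b) :
    a * Real.log (a / b) ≤ (a - b) ^ 2 / b + (a - b) := by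
  calc a * Real.log (a / b) ≤ a * (a / b - 1) := by
        rcases ha.eq_or_lt with rfl | ha'
        · simp
        · exact mul_le_mul_of_nonneg_left (Real.log_le_sub_one_of_pos (div_pos ha' hb)) ha
    _ = (a - b) ^ 2 / b + (a - b) := by field_simp; ring

lemma relEntropy_le_chiSq (hp : 0 ≤ p) (hq : ∀ x, 0 < q x) (hsum : ∑ x, p x = ∑ x, q x) :
    relEntropy p q ≤ ∑ x, (p x - q x) ^ 2 / q x := by
  calc relEntropy p q ≤ ∑ x, ((p x - q x) ^ 2 / q x + (p x - q x)) :=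
        Finset.sum_le_sum fun x _ => mul_log_div_le (hp x) (hq x)
    _ = ∑ x, (p x - q x) ^ 2 / q x := by
        rw [Finset.sum_add_distrib, Finset.sum_sub_distrib, hsum, sub_self, add_zero]

lemma relEntropy_smul_smul (c : ℝ) (p q : 𝒳 → ℝ) :
    relEntropy (c • p) (c • q) = c * relEntropy p q := by
  rcases eq_or_ne c 0 with rfl | hc
  · simp [relEntropy]
  · simp [relEntropy, Finset.mul_sum, mul_assoc, mul_div_mul_left _ _ hc]

lemma relEntropy_eq_add_sum_log (hq : ∀ x, q x = 0 → p x = 0) (hr : ∀ x, r x = 0 → p x = 0) :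
    relEntropy p r = relEntropy p q + ∑ x, p x * Real.log (q x / r x) := by
  unfold relEntropy
  rw [← Finset.sum_add_distrib]
  refine Finset.sum_congr rfl fun x _ => ?_
  rcases eq_or_ne (p x) 0 with hp | hp
  · simp [hp]
  have hqx : q x ≠ 0 := mt (hq x) hp
  rw [← mul_add, ← Real.log_mul (div_ne_zero hp hqx) (div_ne_zero hqx (mt (hr x) hp)),
    div_mul_div_cancel₀ hqx]

lemma relEntropy_smul_right (hp : 0 ≤ p) (hq : ∀ x, 0 < q x) {c : ℝ} (hc : c ≠ 0) :
    relEntropy p (c • q) =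
      relEntropy p ((∑ x, p x) • q) + (∑ x, p x) * Real.log ((∑ x, p x) / c) := by
  have hmass (x : 𝒳) : ((∑ x, p x) • q) x = 0 → p x = 0 := fun h =>
    congrFun ((Fintype.sum_eq_zero_iff_of_nonneg hp).1
      ((mul_eq_zero.1 h).resolve_right (hq x).ne')) x
  have hcq (x : 𝒳) : (c • q) x = 0 → p x = 0 := fun h =>
    absurd h (mul_ne_zero hc (hq x).ne')
  rw [relEntropy_eq_add_sum_log hmass hcq, Finset.sum_mul]
  simp only [Pi.smul_apply, smul_eq_mul, mul_div_mul_right _ _ (hq _).ne']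

end RelEntropy

/-! ### Codebooks for relative entropy -/

/-- A family `Q` of laws on `𝒳` with full support that comes within relative entropy `ε` of every
law: a covering of the simplex, whose members serve as representatives of quantizer cells. -/
structure IsCodebook {ι 𝒳 : Type*} [Fintype 𝒳] (Q : ι → 𝒳 → ℝ) (ε : ℝ) : Prop where
  pos (c : ι) (x : 𝒳) : 0 < Q c x
  sum_eq_one (c : ι) : ∑ x, Q c x = 1
  exists_relEntropy_le (p : 𝒳 → ℝ) (hp : p ∈ stdSimplex ℝ 𝒳) : ∃ c, relEntropy p (Q c) ≤ ε

namespace IsCodebook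

section Fintype

variable {ι κ 𝒳 : Type*} [Fintype 𝒳] {Q : ι → 𝒳 → ℝ} {ε : ℝ}

lemma comp_surjective (hQ : IsCodebook Q ε) {g : κ → ι} (hg : g.Surjective) :
    IsCodebook (Q ∘ g) ε where
  pos c := hQ.pos (g c)
  sum_eq_one c := hQ.sum_eq_one (g c)
  exists_relEntropy_le p hp := hg.exists.1 (hQ.exists_relEntropy_le p hp)

lemma exists_relEntropy_smul_le [Nonempty ι] (hQ : IsCodebook Q ε) {p : 𝒳 → ℝ} (hp : 0 ≤ p) :
    ∃ c, relEntropy p ((∑ x, p x) • Q c) ≤ (∑ x, p x) * ε := by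
  rcases eq_or_ne (∑ x, p x) 0 with hs | hs
  · exact ⟨Classical.arbitrary ι, by simp [relEntropy, (Fintype.sum_eq_zero_iff_of_nonneg hp).1 hs]⟩
  have hs₀ : 0 ≤ ∑ x, p x := Finset.sum_nonneg fun x _ => hp x
  obtain ⟨c, hc⟩ := hQ.exists_relEntropy_le ((∑ x, p x)⁻¹ • p)
    ⟨fun x => mul_nonneg (inv_nonneg.2 hs₀) (hp x),
      by simp [← Finset.mul_sum, inv_mul_cancel₀ hs]⟩
  refine ⟨c, ?_⟩
  calc relEntropy p ((∑ x, p x) • Q c)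
      = relEntropy ((∑ x, p x) • (∑ x, p x)⁻¹ • p) ((∑ x, p x) • Q c) := by
        rw [smul_inv_smul₀ hs]
    _ = (∑ x, p x) * relEntropy ((∑ x, p x)⁻¹ • p) (Q c) := relEntropy_smul_smul _ _ _
    _ ≤ (∑ x, p x) * ε := mul_le_mul_of_nonneg_left hc hs₀

end Fintype

variable {ι κ : Type*} {B : ι → Fin 2 → ℝ} {ε δ : ℝ}

/-- The chain rule for relative entropy: describe first whether the letter is `0`, and if it is
not, which of the remaining letters it is. -/
lemma cons [Nonempty κ] {n : ℕ} {Q : κ → Fin n → ℝ} (hB : IsCodebook B ε) (hQ : IsCodebook Q δ)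
    (hδ : 0 ≤ δ) :
    IsCodebook (fun c : ι × κ => (Fin.cons (B c.1 0) (B c.1 1 • Q c.2) : Fin (n + 1) → ℝ))
      (ε + δ) where
  pos c := Fin.cases (hB.pos c.1 0) fun x => mul_pos (hB.pos c.1 1) (hQ.pos c.2 x)
  sum_eq_one c := by
    simpa [Fin.sum_univ_succ, ← Finset.mul_sum, hQ.sum_eq_one] using hB.sum_eq_one c.1
  exists_relEntropy_le p hp := by
    set s : ℝ := ∑ x, Fin.tail p x with hs
    have htail : 0 ≤ Fin.tail p := fun x => hp.1 x.succ
    have hsum : p 0 + s = 1 := by rw [← hp.2, Fin.sum_univ_succ]; rfl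
    have hs₀ : 0 ≤ s := Finset.sum_nonneg fun x _ => htail x
    have hs₁ : s ≤ 1 := by linarith [hp.1 0]
    obtain ⟨i, hi⟩ := hB.exists_relEntropy_le ![p 0, s]
      ⟨Fin.forall_fin_two.2 ⟨hp.1 0, hs₀⟩, by simpa using hsum⟩
    obtain ⟨j, hj⟩ := hQ.exists_relEntropy_smul_le htail
    refine ⟨(i, j), ?_⟩
    calc relEntropy p (Fin.cons (B i 0) (B i 1 • Q j))
        = p 0 * Real.log (p 0 / B i 0) + relEntropy (Fin.tail p) (B i 1 • Q j) :=
          Fin.sum_univ_succ _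
      _ = relEntropy ![p 0, s] (B i) + relEntropy (Fin.tail p) (s • Q j) := by
          rw [relEntropy_smul_right htail (hQ.pos j) (hB.pos i 1).ne', ← hs]
          simp only [relEntropy, Fin.sum_univ_two, Matrix.cons_val_zero, Matrix.cons_val_one]
          ring
      _ ≤ ε + s * δ := add_le_add hi hj
      _ ≤ ε + δ := by gcongr; exact mul_le_of_le_one_left hδ hs₁

lemma exists_fin_succ [Nonempty ι] (hB : IsCodebook B ε) (hε : 0 ≤ ε) (k : ℕ) :
    ∃ Q : (Fin k → ι) → Fin (k + 1) → ℝ, IsCodebook Q (k * ε) := by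
  induction k with
  | zero =>
    refine ⟨fun _ _ => 1, fun _ _ => one_pos, fun _ => by simp, fun p hp => ⟨Fin.elim0, ?_⟩⟩
    have hp₀ : p 0 = 1 := by simpa using hp.2
    simp [relEntropy, hp₀]
  | succ k ih =>
    obtain ⟨Q, hQ⟩ := ih
    have hcons := (hB.cons hQ (by positivity)).comp_surjective
      (Fin.consEquiv fun _ : Fin (k + 1) => ι).symm.surjective
    exact ⟨_, by convert hcons using 1; push_cast; ring⟩

end IsCodebook

/-! ### A binary codebook on the arcsine scale -/

section BinaryCodebook

open Real

lemma sin_sq_sub_sin_sq (θ φ : ℝ) : sin θ ^ 2 - sin φ ^ 2 = sin (θ - φ) * sin (θ + φ) := by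
  rw [sin_sub, sin_add]
  linear_combination sin φ ^ 2 * sin_sq_add_cos_sq θ - sin θ ^ 2 * sin_sq_add_cos_sq φ

lemma abs_sin_le_two_mul_sin {θ φ : ℝ} (h : |θ - φ| ≤ φ) (hφ : φ ≤ π / 2) :
    |sin θ| ≤ 2 * sin φ := by
  have hδ : |sin (θ - φ)| ≤ sin φ := by
    rw [abs_sin_eq_sin_abs_of_abs_le_pi (by linarith [pi_pos])]
    exact sin_le_sin_of_le_of_le_pi_div_two (by linarith [abs_nonneg (θ - φ), pi_pos]) hφ h
  have hsin : 0 ≤ sin φ := (abs_nonneg _).trans hδ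
  calc |sin θ| = |sin (θ - φ) * cos φ + cos (θ - φ) * sin φ| := by
        rw [← sin_add, sub_add_cancel]
    _ ≤ |sin (θ - φ)| * |cos φ| + |cos (θ - φ)| * sin φ := by
        rw [← abs_mul, ← abs_of_nonneg hsin, ← abs_mul, abs_of_nonneg hsin]
        exact abs_add_le _ _
    _ ≤ sin φ * 1 + 1 * sin φ := by
        gcongr
        exacts [abs_cos_le_one φ, abs_cos_le_one _]
    _ = 2 * sin φ := by ring

lemma sq_sin_sq_sub_sin_sq_le {θ φ : ℝ} (h₀ : |θ - φ| ≤ φ) (h₁ : |θ - φ| ≤ π / 2 - φ) :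
    (sin θ ^ 2 - sin φ ^ 2) ^ 2 ≤ 16 * (θ - φ) ^ 2 * (sin φ ^ 2 * cos φ ^ 2) := by
  have hδ := abs_nonneg (θ - φ)
  have hsin : |sin θ| ≤ 2 * sin φ := abs_sin_le_two_mul_sin h₀ (by linarith)
  have hcos : |cos θ| ≤ 2 * cos φ := by
    rw [← sin_pi_div_two_sub, ← sin_pi_div_two_sub]
    refine abs_sin_le_two_mul_sin ?_ (by linarith)
    rwa [sub_sub_sub_cancel_left, abs_sub_comm]
  have hsin₀ : 0 ≤ sin φ := by linarith [abs_nonneg (sin θ)]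
  have hcos₀ : 0 ≤ cos φ := by linarith [abs_nonneg (cos θ)]
  have hadd : |sin (θ + φ)| ≤ 4 * (sin φ * cos φ) :=
    calc |sin (θ + φ)| ≤ |sin θ| * cos φ + |cos θ| * sin φ := by
          rw [sin_add]
          refine (abs_add_le _ _).trans_eq ?_
          rw [abs_mul, abs_mul, abs_of_nonneg hsin₀, abs_of_nonneg hcos₀]
      _ ≤ 2 * sin φ * cos φ + 2 * cos φ * sin φ := by gcongr
      _ = 4 * (sin φ * cos φ) := by ring
  calc (sin θ ^ 2 - sin φ ^ 2) ^ 2 = |sin (θ - φ)| ^ 2 * |sin (θ + φ)| ^ 2 := by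
        rw [sin_sq_sub_sin_sq, mul_pow, sq_abs, sq_abs]
    _ ≤ |θ - φ| ^ 2 * (4 * (sin φ * cos φ)) ^ 2 := by
        gcongr ?_ ^ 2 * ?_ ^ 2
        exact abs_sin_le_abs
    _ = 16 * (θ - φ) ^ 2 * (sin φ ^ 2 * cos φ ^ 2) := by rw [sq_abs]; ring

lemma relEntropy_sin_sq_cos_sq_le {θ φ : ℝ} (hsin : sin φ ≠ 0) (hcos : cos φ ≠ 0)
    (h₀ : |θ - φ| ≤ φ) (h₁ : |θ - φ| ≤ π / 2 - φ) :
    relEntropy ![sin θ ^ 2, cos θ ^ 2] ![sin φ ^ 2, cos φ ^ 2] ≤ 16 * (θ - φ) ^ 2 := by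
  have hp : 0 ≤ ![sin θ ^ 2, cos θ ^ 2] := Fin.forall_fin_two.2 ⟨sq_nonneg _, sq_nonneg _⟩
  have hq : ∀ x, 0 < ![sin φ ^ 2, cos φ ^ 2] x :=
    Fin.forall_fin_two.2 ⟨sq_pos_of_ne_zero hsin, sq_pos_of_ne_zero hcos⟩
  have hdiff : cos θ ^ 2 - cos φ ^ 2 = -(sin θ ^ 2 - sin φ ^ 2) := by
    rw [cos_sq', cos_sq']
    ring
  calc relEntropy ![sin θ ^ 2, cos θ ^ 2] ![sin φ ^ 2, cos φ ^ 2]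
      ≤ (sin θ ^ 2 - sin φ ^ 2) ^ 2 / sin φ ^ 2 + (cos θ ^ 2 - cos φ ^ 2) ^ 2 / cos φ ^ 2 := by
        simpa using relEntropy_le_chiSq hp hq (by simp)
    _ = (sin θ ^ 2 - sin φ ^ 2) ^ 2 / (sin φ ^ 2 * cos φ ^ 2) := by
        rw [hdiff, neg_sq, div_add_div _ _ (by positivity) (by positivity)]
        congr 1
        linear_combination (sin θ ^ 2 - sin φ ^ 2) ^ 2 * sin_sq_add_cos_sq φ
    _ ≤ 16 * (θ - φ) ^ 2 :=
        (div_le_iff₀ (by positivity)).2 (sq_sin_sq_sub_sin_sq_le h₀ h₁)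

lemma exists_fin_abs_sub_add_half_le {m : ℕ} (hm : m ≠ 0) {x : ℝ} (hx₀ : 0 ≤ x) (hxm : x ≤ m) :
    ∃ j : Fin m, |x - (j + 1 / 2)| ≤ 1 / 2 := by
  rcases hxm.eq_or_lt with rfl | hlt
  · refine ⟨⟨m - 1, by omega⟩, ?_⟩
    rw [Nat.cast_pred (by omega), sub_add, sub_sub_cancel]
    norm_num
  · refine ⟨⟨⌊x⌋₊, (Nat.floor_lt hx₀).2 hlt⟩, abs_le.2 ⟨?_, ?_⟩⟩
    · linarith [Nat.floor_le hx₀]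
    · linarith [Nat.lt_floor_add_one x]

lemma exists_sin_sq_cos_sq_eq {p : Fin 2 → ℝ} (hp : p ∈ stdSimplex ℝ (Fin 2)) :
    ∃ θ, 0 ≤ θ ∧ θ ≤ π / 2 ∧ p = ![sin θ ^ 2, cos θ ^ 2] := by
  have hsum : p 0 + p 1 = 1 := by simpa using hp.2
  have hsqrt : √(p 0) ≤ 1 := sqrt_le_one.2 (by linarith [hp.1 1])
  have hsin : sin (arcsin √(p 0)) ^ 2 = p 0 := by
    rw [sin_arcsin (by linarith [sqrt_nonneg (p 0)]) hsqrt, sq_sqrt (hp.1 0)]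
  refine ⟨arcsin √(p 0), arcsin_nonneg.2 (sqrt_nonneg _), arcsin_le_pi_div_two _, ?_⟩
  ext x
  fin_cases x
  · simp [hsin]
  · simp only [cos_sq', hsin]
    simp [← hsum]

/-- The `m` laws `(sin² φ, cos² φ)` with `φ` the midpoints of `m` equal subintervals of
`[0, π / 2]`: in the parameter `φ`, the `χ²`-divergence is comparable to the squared distance
uniformly up to the endpoints. -/
noncomputable def binaryCodebook (m : ℕ) (j : Fin m) : Fin 2 → ℝ :=
  ![sin ((j + 1 / 2) * (π / (2 * m))) ^ 2, cos ((j + 1 / 2) * (π / (2 * m))) ^ 2]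

lemma isCodebook_binaryCodebook {m : ℕ} (hm : m ≠ 0) :
    IsCodebook (binaryCodebook m) (π ^ 2 / m ^ 2) := by
  set h : ℝ := π / (2 * m) with hh
  have hh₀ : 0 < h := by positivity
  have hmh : m * h = π / 2 := by rw [hh]; field_simp
  have hmid_lower (j : Fin m) : 1 / 2 * h ≤ (j + 1 / 2) * h := by
    gcongr
    simp
  have hmid_upper (j : Fin m) : (j + 1 / 2) * h ≤ π / 2 - 1 / 2 * h := by
    have hj : (j : ℝ) + 1 ≤ m := by exact_mod_cast j.isLt
    rw [← hmh, ← sub_mul]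
    gcongr
    linarith
  have hsin (j : Fin m) : 0 < sin ((j + 1 / 2) * h) :=
    sin_pos_of_pos_of_lt_pi (by positivity) (by linarith [hmid_upper j, pi_pos])
  have hcos (j : Fin m) : 0 < cos ((j + 1 / 2) * h) :=
    cos_pos_of_mem_Ioo ⟨by linarith [hmid_lower j, pi_pos], by linarith [hmid_upper j]⟩
  refine ⟨fun j => Fin.forall_fin_two.2 ⟨pow_pos (hsin j) 2, pow_pos (hcos j) 2⟩,
    fun j => by simp [binaryCodebook], fun p hp => ?_⟩
  obtain ⟨θ, hθ₀, hθ₁, rfl⟩ := exists_sin_sq_cos_sq_eq hp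
  obtain ⟨j, hj⟩ := exists_fin_abs_sub_add_half_le hm (x := θ / h) (by positivity)
    ((div_le_iff₀ hh₀).2 (hmh ▸ hθ₁))
  have hdist : |θ - (j + 1 / 2) * h| ≤ 1 / 2 * h := by
    rwa [← div_le_iff₀ hh₀, ← abs_of_pos hh₀, ← abs_div, abs_of_pos hh₀, sub_div,
      mul_div_cancel_right₀ _ hh₀.ne']
  refine ⟨j, (relEntropy_sin_sq_cos_sq_le (hsin j).ne' (hcos j).ne'
    (hdist.trans (hmid_lower j)) (by linarith [hmid_upper j])).trans ?_⟩
  calc 16 * (θ - (j + 1 / 2) * h) ^ 2 = 16 * |θ - (j + 1 / 2) * h| ^ 2 := by rw [sq_abs]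
    _ ≤ 16 * (1 / 2 * h) ^ 2 := by gcongr
    _ = π ^ 2 / m ^ 2 := by rw [hh]; field_simp; norm_num

end BinaryCodebook

/-! ### Mutual information and quantizers -/

section Quantizer

variable {𝒳 𝒴 : Type*} {p : 𝒳 → 𝒴 → ℝ} {M : ℕ}

/-- The law `P_X` of the first coordinate under the joint mass function `p`. -/
noncomputable def fstMarginal (p : 𝒳 → 𝒴 → ℝ) (x : 𝒳) : ℝ :=
  ∑' y, p x y

namespace IsJointPMF

lemma hasSum_fstMarginal (hp : IsJointPMF p) (x : 𝒳) : HasSum (p x) (fstMarginal p x) :=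
  (hp.2.1.prod_factor x).hasSum

lemma fstMarginal_nonneg (hp : IsJointPMF p) (x : 𝒳) : 0 ≤ fstMarginal p x :=
  tsum_nonneg (hp.1 x)

lemma le_fstMarginal (hp : IsJointPMF p) (x : 𝒳) (y : 𝒴) : p x y ≤ fstMarginal p x :=
  (hp.hasSum_fstMarginal x).summable.le_tsum y fun y _ => hp.1 x y

lemma eq_zero_of_fstMarginal_eq_zero (hp : IsJointPMF p) {x : 𝒳} (h : fstMarginal p x = 0)
    (y : 𝒴) : p x y = 0 :=
  le_antisymm (h ▸ hp.le_fstMarginal x y) (hp.1 x y)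

lemma hasSum_mul_comp (hp : IsJointPMF p) (f : 𝒴 → Fin M) (x : 𝒳) (L : Fin M → ℝ) :
    HasSum (fun y => p x y * L (f y)) (∑ c, quantJoint p f x c * L c) := by
  have hcell (c : Fin M) : Summable fun y => if f y = c then p x y else 0 :=
    ((hp.hasSum_fstMarginal x).summable.indicator {y | f y = c}).congr fun y => by
      simp [Set.indicator_apply]
  have h : HasSum (fun y => ∑ c, (if f y = c then p x y else 0) * L c)
      (∑ c, quantJoint p f x c * L c) :=
    hasSum_sum fun c _ => (hcell c).hasSum.mul_right (L c)
  simpa only [ite_mul, zero_mul, Finset.sum_ite_eq, Finset.mem_univ, if_true] using h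

lemma fstMarginal_quantJoint (hp : IsJointPMF p) (f : 𝒴 → Fin M) :
    fstMarginal (quantJoint p f) = fstMarginal p := by
  ext x
  have h := hp.hasSum_mul_comp f x 1
  simp only [Pi.one_apply, mul_one] at h
  exact (tsum_fintype _).trans (h.unique (hp.hasSum_fstMarginal x))

protected lemma quantJoint (hp : IsJointPMF p) (f : 𝒴 → Fin M) :
    IsJointPMF (quantJoint p f) := by
  have hnonneg (x : 𝒳) (c : Fin M) : 0 ≤ quantJoint p f x c := tsum_nonneg fun y => by
    split_ifs
    exacts [hp.1 x y, le_rfl]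
  have hfst (x : 𝒳) : ∑' c, quantJoint p f x c = ∑' y, p x y :=
    congrFun (hp.fstMarginal_quantJoint f) x
  refine ⟨hnonneg, (summable_prod_of_nonneg fun z => hnonneg z.1 z.2).2
    ⟨fun x => (hasSum_fintype _).summable, ?_⟩, ?_⟩
  · simpa only [hfst] using hp.2.1.prod
  · simpa only [hfst] using hp.2.2

end IsJointPMF

end Quantizer

section MutualInformation

variable {𝒳 𝒴 : Type*} [Fintype 𝒳] {p : 𝒳 → 𝒴 → ℝ}

/-- The law `P_Y` of the second coordinate under the joint mass function `p`; the first alphabet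
is finite throughout, hence the finite sum. -/
def sndMarginal (p : 𝒳 → 𝒴 → ℝ) (y : 𝒴) : ℝ :=
  ∑ x, p x y

lemma miBits_eq_div_log_two (p : 𝒳 → 𝒴 → ℝ) :
    miBits p = (∑ x, ∑' y, p x y * Real.log (p x y / (fstMarginal p x * sndMarginal p y))) /
      Real.log 2 := by
  simp only [miBits, fstMarginal, sndMarginal, tsum_fintype, Real.logb, ← mul_div_assoc,
    tsum_div_const, Finset.sum_div]

namespace IsJointPMF

lemma sum_fstMarginal (hp : IsJointPMF p) : ∑ x, fstMarginal p x = 1 :=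
  (tsum_fintype _).symm.trans hp.2.2

lemma hasSum_sndMarginal (hp : IsJointPMF p) : HasSum (sndMarginal p) 1 := by
  rw [← hp.sum_fstMarginal]
  exact hasSum_sum fun x _ => hp.hasSum_fstMarginal x

lemma le_sndMarginal (hp : IsJointPMF p) (x : 𝒳) (y : 𝒴) : p x y ≤ sndMarginal p y :=
  Finset.single_le_sum (f := fun x => p x y) (fun x _ => hp.1 x y) (Finset.mem_univ x)

lemma sndMarginal_nonneg (hp : IsJointPMF p) (y : 𝒴) : 0 ≤ sndMarginal p y :=
  Finset.sum_nonneg fun x _ => hp.1 x y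

lemma eq_zero_of_sndMarginal_eq_zero (hp : IsJointPMF p) {y : 𝒴} (h : sndMarginal p y = 0)
    (x : 𝒳) : p x y = 0 :=
  le_antisymm (h ▸ hp.le_sndMarginal x y) (hp.1 x y)

lemma eq_zero_of_mul_marginal_eq_zero (hp : IsJointPMF p) {x : 𝒳} {y : 𝒴}
    (h : fstMarginal p x * sndMarginal p y = 0) : p x y = 0 :=
  (mul_eq_zero.1 h).elim (hp.eq_zero_of_fstMarginal_eq_zero · y)
    (hp.eq_zero_of_sndMarginal_eq_zero · x)

lemma sub_le_mul_log_div_marginal (hp : IsJointPMF p) (x : 𝒳) (y : 𝒴) :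
    p x y - fstMarginal p x * sndMarginal p y ≤
      p x y * Real.log (p x y / (fstMarginal p x * sndMarginal p y)) :=
  sub_le_mul_log_div (hp.1 x y) (mul_nonneg (hp.fstMarginal_nonneg x) (hp.sndMarginal_nonneg y))
    hp.eq_zero_of_mul_marginal_eq_zero

lemma mul_log_div_marginal_le (hp : IsJointPMF p) (x : 𝒳) (y : 𝒴) :
    p x y * Real.log (p x y / (fstMarginal p x * sndMarginal p y)) ≤
      p x y * -Real.log (fstMarginal p x) := by
  rcases (hp.1 x y).eq_or_lt with h | h
  · simp [← h]
  have hfst : 0 < fstMarginal p x := h.trans_le (hp.le_fstMarginal x y)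
  have hsnd : 0 < sndMarginal p y := h.trans_le (hp.le_sndMarginal x y)
  rw [← Real.log_inv, ← div_div, div_right_comm, div_eq_mul_inv]
  gcongr
  exact mul_le_of_le_one_left (by positivity) ((div_le_one hsnd).2 (hp.le_sndMarginal x y))

lemma summable_mul_log_div (hp : IsJointPMF p) (x : 𝒳) :
    Summable fun y => p x y * Real.log (p x y / (fstMarginal p x * sndMarginal p y)) := by
  have hrow : Summable (p x) := (hp.hasSum_fstMarginal x).summable
  have hdiff : Summable fun y => p x y - fstMarginal p x * sndMarginal p y :=
    hrow.sub (hp.hasSum_sndMarginal.summable.mul_left _)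
  have h := Summable.of_nonneg_of_le (fun y => sub_nonneg.2 (hp.sub_le_mul_log_div_marginal x y))
    (fun y => sub_le_sub_right (hp.mul_log_div_marginal_le x y) _) ((hrow.mul_right _).sub hdiff)
  simpa only [sub_add_cancel] using h.add hdiff

lemma hasSum_relEntropy_marginal (hp : IsJointPMF p) :
    HasSum (fun y => relEntropy (p · y) (fun x => fstMarginal p x * sndMarginal p y))
      (miBits p * Real.log 2) := by
  rw [miBits_eq_div_log_two, div_mul_cancel₀ _ (Real.log_pos one_lt_two).ne']
  exact hasSum_sum fun x _ => (hp.summable_mul_log_div x).hasSum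

lemma miBits_le_sum_negMulLog (hp : IsJointPMF p) :
    miBits p ≤ (∑ x, Real.negMulLog (fstMarginal p x)) / Real.log 2 := by
  rw [miBits_eq_div_log_two]
  refine div_le_div_of_nonneg_right (Finset.sum_le_sum fun x _ => ?_)
    (Real.log_nonneg one_le_two)
  calc ∑' y, p x y * Real.log (p x y / (fstMarginal p x * sndMarginal p y))
      ≤ ∑' y, p x y * -Real.log (fstMarginal p x) :=
        (hp.summable_mul_log_div x).tsum_le_tsum (hp.mul_log_div_marginal_le x)
          ((hp.hasSum_fstMarginal x).summable.mul_right _)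
    _ = Real.negMulLog (fstMarginal p x) := by
        rw [tsum_mul_right, Real.negMulLog, neg_mul_comm]; rfl

lemma relEntropy_marginal_eq_add (hp : IsJointPMF p) {q : 𝒳 → ℝ} (hq : ∀ x, 0 < q x) (y : 𝒴) :
    relEntropy (p · y) (fun x => fstMarginal p x * sndMarginal p y) =
      relEntropy (p · y) (sndMarginal p y • q) +
        ∑ x, p x y * Real.log (q x / fstMarginal p x) := by
  rcases eq_or_ne (sndMarginal p y) 0 with hy | hy
  · simp [relEntropy, hp.eq_zero_of_sndMarginal_eq_zero hy]
  rw [relEntropy_eq_add_sum_log (q := sndMarginal p y • q)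
    (fun x h => absurd h (mul_ne_zero hy (hq x).ne')) fun x => hp.eq_zero_of_mul_marginal_eq_zero]
  simp only [Pi.smul_apply, smul_eq_mul, mul_comm (fstMarginal p _), mul_div_mul_left _ _ hy]

lemma miBits_quantJoint_le_quantMI {𝒳 : Type*} [Finite 𝒳] {p : 𝒳 → 𝒴 → ℝ} {M : ℕ}
    (hp : IsJointPMF p) (f : 𝒴 → Fin M) : miBits (quantJoint p f) ≤ quantMI p M := by
  cases nonempty_fintype 𝒳
  refine le_ciSup (f := fun g : 𝒴 → Fin M => miBits (quantJoint p g))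
    ⟨(∑ x, Real.negMulLog (fstMarginal p x)) / Real.log 2, ?_⟩ f
  rintro _ ⟨g, rfl⟩
  rw [← hp.fstMarginal_quantJoint g]
  exact (hp.quantJoint g).miBits_le_sum_negMulLog

end IsJointPMF

namespace IsCodebook

variable {ε : ℝ}

lemma sum_mul_log_le_miBits {ι : Type*} [Fintype ι] {Q : ι → 𝒳 → ℝ} {r : 𝒳 → ι → ℝ}
    (hQ : IsCodebook Q ε) (hr : IsJointPMF r) :
    ∑ x, ∑ c, r x c * Real.log (Q c x / fstMarginal r x) ≤ miBits r * Real.log 2 := by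
  refine (Finset.sum_comm.trans_le (Finset.sum_le_sum fun c _ => ?_)).trans_eq
    ((hasSum_fintype _).unique hr.hasSum_relEntropy_marginal)
  rw [hr.relEntropy_marginal_eq_add (hQ.pos c) c]
  refine le_add_of_nonneg_left (relEntropy_nonneg (hr.1 · c)
    (fun x => mul_nonneg (hr.sndMarginal_nonneg c) (hQ.pos c x).le)
    (fun x h => hr.eq_zero_of_sndMarginal_eq_zero
      ((mul_eq_zero.1 h).resolve_right (hQ.pos c x).ne') x) ?_)
  simp [← Finset.mul_sum, hQ.sum_eq_one, sndMarginal]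

lemma exists_miBits_le_add {M : ℕ} [NeZero M] {Q : Fin M → 𝒳 → ℝ}
    (hQ : IsCodebook Q ε) (hp : IsJointPMF p) :
    ∃ f : 𝒴 → Fin M, miBits p ≤ miBits (quantJoint p f) + ε / Real.log 2 := by
  choose f hf using fun y => hQ.exists_relEntropy_smul_le (p := (p · y)) (hp.1 · y)
  have hloss (y : 𝒴) : relEntropy (p · y) (fun x => fstMarginal p x * sndMarginal p y) ≤
      sndMarginal p y * ε + ∑ x, p x y * Real.log (Q (f y) x / fstMarginal p x) := by
    rw [hp.relEntropy_marginal_eq_add (hQ.pos (f y)) y]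
    gcongr
    exact hf y
  have hcode : HasSum (fun y => ∑ x, p x y * Real.log (Q (f y) x / fstMarginal p x))
      (∑ x, ∑ c, quantJoint p f x c * Real.log (Q c x / fstMarginal p x)) :=
    hasSum_sum fun x _ => hp.hasSum_mul_comp f x fun c => Real.log (Q c x / fstMarginal p x)
  have hquant := hQ.sum_mul_log_le_miBits (hp.quantJoint f)
  rw [hp.fstMarginal_quantJoint f] at hquant
  have hlog : 0 < Real.log 2 := Real.log_pos one_lt_two
  refine ⟨f, le_of_mul_le_mul_right ?_ hlog⟩
  calc miBits p * Real.log 2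
      ≤ 1 * ε + ∑ x, ∑ c, quantJoint p f x c * Real.log (Q c x / fstMarginal p x) :=
        hasSum_le hloss hp.hasSum_relEntropy_marginal
          ((hp.hasSum_sndMarginal.mul_right ε).add hcode)
    _ ≤ ε + miBits (quantJoint p f) * Real.log 2 := by rw [one_mul]; gcongr
    _ = (miBits (quantJoint p f) + ε / Real.log 2) * Real.log 2 := by field_simp; ring

end IsCodebook

end MutualInformation

/-! ### The degrading cost -/

section UniformGraph

variable {𝒳 𝒴 : Type*} [Fintype 𝒳] [DecidableEq 𝒴]

/-- The joint law of `(X, e X)` for `X` uniformly distributed, the noiseless case: it attains the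
largest possible mutual information. -/
noncomputable def uniformGraph (e : 𝒳 ↪ 𝒴) (x : 𝒳) : 𝒴 → ℝ :=
  Pi.single (e x) (Fintype.card 𝒳 : ℝ)⁻¹

lemma hasSum_uniformGraph (e : 𝒳 ↪ 𝒴) (x : 𝒳) :
    HasSum (uniformGraph e x) (Fintype.card 𝒳 : ℝ)⁻¹ :=
  hasSum_pi_single _ _

lemma fstMarginal_uniformGraph (e : 𝒳 ↪ 𝒴) (x : 𝒳) :
    fstMarginal (uniformGraph e) x = (Fintype.card 𝒳 : ℝ)⁻¹ :=
  (hasSum_uniformGraph e x).tsum_eq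

lemma sndMarginal_uniformGraph_apply (e : 𝒳 ↪ 𝒴) (x : 𝒳) :
    sndMarginal (uniformGraph e) (e x) = (Fintype.card 𝒳 : ℝ)⁻¹ := by
  classical
  simp [sndMarginal, uniformGraph, Pi.single_apply, e.injective.eq_iff]

lemma isJointPMF_uniformGraph [Nonempty 𝒳] (e : 𝒳 ↪ 𝒴) : IsJointPMF (uniformGraph e) := by
  have hnonneg (x : 𝒳) (y : 𝒴) : 0 ≤ uniformGraph e x y := by
    rw [uniformGraph, Pi.single_apply]
    positivity
  refine ⟨hnonneg, (summable_prod_of_nonneg fun z => hnonneg z.1 z.2).2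
    ⟨fun x => (hasSum_uniformGraph e x).summable, (hasSum_fintype _).summable⟩, ?_⟩
  simp only [(hasSum_uniformGraph e _).tsum_eq, tsum_fintype, Finset.sum_const, Finset.card_univ,
    nsmul_eq_mul]
  exact mul_inv_cancel₀ (Nat.cast_ne_zero.2 Fintype.card_ne_zero)

lemma miBits_uniformGraph [Nonempty 𝒳] (e : 𝒳 ↪ 𝒴) :
    miBits (uniformGraph e) = Real.logb 2 (Fintype.card 𝒳) := by
  have hterm (x : 𝒳) : ∑' y, uniformGraph e x y * Real.log (uniformGraph e x y /
      (fstMarginal (uniformGraph e) x * sndMarginal (uniformGraph e) y)) =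
      (Fintype.card 𝒳 : ℝ)⁻¹ * Real.log (Fintype.card 𝒳) := by
    rw [tsum_eq_single (e x) fun y hy => by simp [uniformGraph, hy],
      fstMarginal_uniformGraph, sndMarginal_uniformGraph_apply]
    simp [uniformGraph]
  rw [miBits_eq_div_log_two, Finset.sum_congr rfl fun x _ => hterm x]
  simp [Real.logb]

end UniformGraph

lemma DC_le {K M : ℕ} {δ : ℝ} (hδ : 0 ≤ δ)
    (h : ∀ p : Fin K → ℕ → ℝ, IsJointPMF p → miBits p ≤ quantMI p M + δ) : DC K M ≤ δ := by
  refine Real.sSup_le ?_ hδ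
  rintro _ ⟨β, hβ₀, hβ, rfl⟩
  have hK : K ≠ 0 := by
    rintro rfl
    simp at hβ
    linarith
  have : NeZero K := ⟨hK⟩
  -- without this law the infimum defining `ID` could be over the empty set, hence `0`
  have hattained : β ≤ miBits (uniformGraph (Fin.valEmbedding (n := K))) := by
    simpa [miBits_uniformGraph] using hβ
  rw [sub_le_comm]
  refine le_csInf ⟨_, _, isJointPMF_uniformGraph _, hattained, rfl⟩ ?_
  rintro _ ⟨p, hp, hβp, rfl⟩
  linarith [h p hp]

lemma IsCodebook.miBits_le_quantMI_add {ι 𝒳 𝒴 : Type*} [Finite ι] [Nonempty ι] [Fintype 𝒳]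
    {Q : ι → 𝒳 → ℝ} {ε : ℝ} (hQ : IsCodebook Q ε) {p : 𝒳 → 𝒴 → ℝ} (hp : IsJointPMF p) {M : ℕ}
    (hM : Nat.card ι ≤ M) : miBits p ≤ quantMI p M + ε / Real.log 2 := by
  cases nonempty_fintype ι
  obtain ⟨g⟩ : Nonempty (ι ↪ Fin M) :=
    Function.Embedding.nonempty_of_card_le (by simpa using hM)
  have : NeZero M := ⟨(Nat.card_pos.trans_le hM).ne'⟩
  obtain ⟨f, hf⟩ :=
    (hQ.comp_surjective (Function.invFun_surjective g.injective)).exists_miBits_le_add hp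
  linarith [hp.miBits_quantJoint_le_quantMI f]

lemma DC_succ_le_of_pow_le {k m M : ℕ} (hm : m ≠ 0) (hM : m ^ k ≤ M) :
    DC (k + 1) M ≤ k * (Real.pi ^ 2 / m ^ 2) / Real.log 2 := by
  have : NeZero m := ⟨hm⟩
  obtain ⟨Q, hQ⟩ := (isCodebook_binaryCodebook hm).exists_fin_succ (by positivity) k
  exact DC_le (by positivity) fun p hp => hQ.miBits_le_quantMI_add hp (by simpa using hM)

lemma exists_pow_le_and_inv_sq_le {k M : ℕ} (hk : k ≠ 0) (hM : M ≠ 0) :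
    ∃ m : ℕ, m ≠ 0 ∧ m ^ k ≤ M ∧ ((m : ℝ) ^ 2)⁻¹ ≤ 4 * (M : ℝ) ^ (-(2 : ℝ) / k) := by
  have hroot : Nat.nthRoot k M ≠ 0 := by
    rw [← Nat.one_le_iff_ne_zero, Nat.le_nthRoot_iff hk, one_pow]
    exact Nat.one_le_iff_ne_zero.2 hM
  have hlt : M < (Nat.nthRoot k M + 1) ^ k := Nat.lt_pow_nthRoot_add_one hk M
  refine ⟨Nat.nthRoot k M, hroot, Nat.pow_nthRoot_le (.inl hk), ?_⟩
  generalize Nat.nthRoot k M = m at hroot hlt ⊢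
  have hM' : (M : ℝ) ≤ (2 * m) ^ k := by
    have hm : m + 1 ≤ 2 * m := by omega
    exact_mod_cast hlt.le.trans (Nat.pow_le_pow_left hm k)
  calc ((m : ℝ) ^ 2)⁻¹ = 4 * ((2 * m) ^ k : ℝ) ^ (-(2 : ℝ) / k) := by
        rw [div_eq_inv_mul, Real.rpow_mul (by positivity), Real.pow_rpow_inv_natCast
          (by positivity) hk, Real.rpow_neg (by positivity), Real.rpow_two]
        field_simp
        norm_num
    _ ≤ 4 * (M : ℝ) ^ (-(2 : ℝ) / k) := by
        gcongr 4 * ?_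
        exact Real.rpow_le_rpow_of_nonpos (by positivity) hM'
          (div_nonpos_of_nonpos_of_nonneg (by norm_num) (by positivity))

theorem degrading_cost_bound_general (K : ℕ) (hK : 2 ≤ K) (M : ℕ) (hM : M ≠ 0) :
    DC K M ≤ 57 * ((K : ℝ) - 1) * (M : ℝ) ^ (-(2 : ℝ) / ((K : ℝ) - 1)) := by
  obtain ⟨k, rfl⟩ : ∃ k, K = k + 1 := ⟨K - 1, by omega⟩
  obtain ⟨m, hm, hmM, hrate⟩ := exists_pow_le_and_inv_sq_le (k := k) (by omega) hM
  -- rounding the `(K - 1)`-st root of `M` down to the integer `m` costs the factor `4`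
  have hconst : 4 * Real.pi ^ 2 / Real.log 2 ≤ 57 := by
    rw [div_le_iff₀ (Real.log_pos one_lt_two)]
    nlinarith [Real.log_two_gt_d9, Real.pi_pos, Real.pi_lt_d4]
  rw [Nat.cast_succ, add_sub_cancel_right]
  calc DC (k + 1) M ≤ k * (Real.pi ^ 2 / m ^ 2) / Real.log 2 := DC_succ_le_of_pow_le hm hmM
    _ = Real.pi ^ 2 / Real.log 2 * k * ((m : ℝ) ^ 2)⁻¹ := by ring
    _ ≤ Real.pi ^ 2 / Real.log 2 * k * (4 * (M : ℝ) ^ (-(2 : ℝ) / k)) := by gcongr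
    _ = 4 * Real.pi ^ 2 / Real.log 2 * k * (M : ℝ) ^ (-(2 : ℝ) / k) := by ring
    _ ≤ 57 * k * (M : ℝ) ^ (-(2 : ℝ) / k) := by gcongr

/-- Proposition 7: refined additive gap bound,
`DC(K, M) ≤ 1268 (K-1) M^{-2/(K-1)}` whenever `M^{1/(K-1)} ≥ 4` is an integer. -/
theorem degrading_cost_bound (K : ℕ) (hK : 2 ≤ K) (M m : ℕ) (hm : 4 ≤ m)
    (hMm : M = m ^ (K - 1)) :
    DC K M ≤ 1268 * ((K : ℝ) - 1) * (M : ℝ) ^ (-(2 : ℝ) / ((K : ℝ) - 1)) := by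
  have hK₀ : (0 : ℝ) ≤ K - 1 := sub_nonneg.2 (by exact_mod_cast one_le_two.trans hK)
  have hM : M ≠ 0 := hMm ▸ pow_ne_zero _ (by omega)
  exact (degrading_cost_bound_general K hK M hM).trans (by gcongr; norm_num)
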